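/- Suppose 1 < p, q < ∞ and one of the following holds: (i) 1/p + 1/q = 1; (ii) p = 2 or q = 2; (iii) 2 < p < ∞ and 2 < q < ∞. Let q' = q/(q−1) be the conjugate exponent of q. Then the set of extreme points of the closed unit ball of L(ℓ^p_2, ℓ^{q'}_2) is not dense in the unit sphere { T : ‖T‖ = 1 } of L(ℓ^p_2, ℓ^{q'}_2). -/

import Mathlib

/-! Write `s = q / (q - 1)`. Let `T = flat c`, `T z = c (z₁ + z₂) (1, 1)`, with `c` normalised so
that `‖T‖ = 1`. By strict convexity of `x ↦ x ^ p` it attains its norm only on the diagonal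
(`flat_lt_one`), away from the coordinate axes in both the domain and the range, so both norms are
smooth there and the maximum is nondegenerate.

Concretely, compare `‖A w‖_s ^ s` and `‖w‖_p ^ s` along the line `w = (1 + t, 1 - t)`; their
difference is `gap p s A t`. Its second derivative at `t = 0` is negative for `A = T`, hence on
`(-ρ, ρ)` for all `A` near `T` (`exists_radius`). On unit vectors outside the cone `|t| < ρ`, every `A`
near `T` is strictly contractive, by compactness (`eventually_lt_one`).

Let `S` be near `T`, in the unit ball. If it is strictly contractive, it is an interior point of the
ball. Otherwise it attains norm one at some `(1 + t₀, 1 - t₀)` with `|t₀| < ρ`, and the gap of `S` has a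
vanishing maximum at `t₀`. Let `D ≠ 0` be the rank-one operator killing `(1 + t₀, 1 - t₀)` with range
tangent to the `ℓ^s` sphere at the image of that vector. The gaps of `S ± δD` agree with that of `S` to
first order at `t₀` (`gap_add_dir`) and are concave, hence nonpositive (`gap_nonpos`), so `S ± δD` lie
in the unit ball for small `δ` and `S` is not extreme. Thus a neighbourhood of `T` contains no extreme
points. -/

noncomputable section

/-- The ℓ^r norm on ℝ². -/
def pnorm (r : ℝ) (z : ℝ × ℝ) : ℝ := (|z.1| ^ r + |z.2| ^ r) ^ (1 / r)

/-- Apply a 2×2 real matrix, viewed as a linear operator ℝ² → ℝ², to a vector. -/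
def app (A : Matrix (Fin 2) (Fin 2) ℝ) (z : ℝ × ℝ) : ℝ × ℝ :=
  (A 0 0 * z.1 + A 0 1 * z.2, A 1 0 * z.1 + A 1 1 * z.2)

/-- Operator norm from ℓ^p_2 to ℓ^q_2. -/
def opNorm (p q : ℝ) (A : Matrix (Fin 2) (Fin 2) ℝ) : ℝ :=
  sSup {c : ℝ | ∃ z : ℝ × ℝ, pnorm p z = 1 ∧ c = pnorm q (app A z)}

/-- Closed unit ball of L(ℓ^p_2, ℓ^q_2). -/
def unitBall (p q : ℝ) : Set (Matrix (Fin 2) (Fin 2) ℝ) := {A | opNorm p q A ≤ 1}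

/-- The rank-one operator u ⊗ v : z ↦ (u·z)·v. -/
def tensor (u v : ℝ × ℝ) : Matrix (Fin 2) (Fin 2) ℝ :=
  !![v.1 * u.1, v.1 * u.2; v.2 * u.1, v.2 * u.2]

/-- Signed power of a vector: (sgn z1 |z1|^r, sgn z2 |z2|^r). -/
def spow (z : ℝ × ℝ) (r : ℝ) : ℝ × ℝ :=
  (Real.sign z.1 * |z.1| ^ r, Real.sign z.2 * |z.2| ^ r)

/-- Rotation: z^o = (−z2, z1). -/
def rot (z : ℝ × ℝ) : ℝ × ℝ := (-z.2, z.1)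

open Topology Filter

/-! ### Norms, operator norms and extreme points -/

lemma pnorm_smul {r : ℝ} (hr : 0 < r) (l : ℝ) (z : ℝ × ℝ) :
    pnorm r (l * z.1, l * z.2) = |l| * pnorm r z := by
  unfold pnorm
  simp only [abs_mul]
  rw [Real.mul_rpow (abs_nonneg _) (abs_nonneg _), Real.mul_rpow (abs_nonneg _) (abs_nonneg _),
    ← mul_add, Real.mul_rpow (by positivity) (by positivity), ← Real.rpow_mul (abs_nonneg _),
    mul_one_div_cancel hr.ne', Real.rpow_one]

lemma app_smul (A : Matrix (Fin 2) (Fin 2) ℝ) (l : ℝ) (z : ℝ × ℝ) :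
    app A (l * z.1, l * z.2) = (l * (app A z).1, l * (app A z).2) := by
  simp only [app, Prod.mk.injEq]; constructor <;> ring

lemma continuous_pnorm {r : ℝ} (hr : 0 < r) : Continuous (pnorm r) := by
  have : 0 ≤ 1 / r := by positivity
  unfold pnorm
  exact ((continuous_fst.abs.rpow_const fun _ => Or.inr hr.le).add
    (continuous_snd.abs.rpow_const fun _ => Or.inr hr.le)).rpow_const fun _ => Or.inr this

lemma continuous_pnorm_app {s : ℝ} (hs : 0 < s) :
    Continuous fun x : Matrix (Fin 2) (Fin 2) ℝ × (ℝ × ℝ) => pnorm s (app x.1 x.2) := by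
  refine (continuous_pnorm hs).comp ?_
  unfold app
  fun_prop

lemma abs_fst_le_pnorm {r : ℝ} (hr : 0 < r) (z : ℝ × ℝ) : |z.1| ≤ pnorm r z := by
  have h : (|z.1| ^ r) ^ (1 / r) ≤ pnorm r z := by
    unfold pnorm
    exact Real.rpow_le_rpow (by positivity) (le_add_of_nonneg_right (by positivity))
      (by positivity)
  rwa [← Real.rpow_mul (abs_nonneg _), mul_one_div_cancel hr.ne', Real.rpow_one] at h

lemma abs_snd_le_pnorm {r : ℝ} (hr : 0 < r) (z : ℝ × ℝ) : |z.2| ≤ pnorm r z := by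
  have h := abs_fst_le_pnorm hr (z.2, z.1)
  unfold pnorm at *
  simpa [add_comm] using h

lemma pnorm_eq_one_iff {r : ℝ} (hr : 0 < r) (z : ℝ × ℝ) :
    pnorm r z = 1 ↔ |z.1| ^ r + |z.2| ^ r = 1 := by
  have h := Real.rpow_left_inj (x := |z.1| ^ r + |z.2| ^ r) (y := 1) (z := 1 / r) (by positivity)
    zero_le_one (by positivity)
  rwa [Real.one_rpow] at h

lemma isCompact_psphere {r : ℝ} (hr : 0 < r) : IsCompact {z : ℝ × ℝ | pnorm r z = 1} := by
  refine Metric.isCompact_of_isClosed_isBounded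
    (isClosed_eq (continuous_pnorm hr) continuous_const) ?_
  refine (Metric.isBounded_closedBall (x := (0 : ℝ × ℝ)) (r := 1)).subset fun z hz => ?_
  have hz : pnorm r z = 1 := hz
  have h1 := abs_fst_le_pnorm hr z
  have h2 := abs_snd_le_pnorm hr z
  rw [hz] at h1 h2
  simpa [Prod.norm_def] using ⟨h1, h2⟩

lemma pnorm_e {r : ℝ} (hr : 0 < r) : pnorm r (1, 0) = 1 ∧ pnorm r (0, 1) = 1 := by
  constructor <;> simp [pnorm, Real.zero_rpow hr.ne']

lemma le_opNorm {p s : ℝ} (hp : 0 < p) (hs : 0 < s) (A : Matrix (Fin 2) (Fin 2) ℝ) {z : ℝ × ℝ}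
    (hz : pnorm p z = 1) : pnorm s (app A z) ≤ opNorm p s A := by
  have hc : Continuous fun z => pnorm s (app A z) :=
    (continuous_pnorm_app hs).comp (by fun_prop : Continuous fun z : ℝ × ℝ => (A, z))
  refine le_csSup ?_ ⟨z, hz, rfl⟩
  have := ((isCompact_psphere hp).image hc).bddAbove
  refine this.mono ?_
  rintro c ⟨w, hw, rfl⟩
  exact ⟨w, hw, rfl⟩

lemma opNorm_le {p s c : ℝ} (hp : 0 < p) {A : Matrix (Fin 2) (Fin 2) ℝ}
    (h : ∀ z, pnorm p z = 1 → pnorm s (app A z) ≤ c) : opNorm p s A ≤ c := by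
  refine csSup_le ⟨_, (1, 0), (pnorm_e hp).1, rfl⟩ ?_
  rintro _ ⟨z, hz, rfl⟩
  exact h z hz

lemma abs_entry_le_opNorm {p s : ℝ} (hp : 0 < p) (hs : 0 < s) (A : Matrix (Fin 2) (Fin 2) ℝ)
    (i j : Fin 2) : |A i j| ≤ opNorm p s A := by
  have h1 := le_opNorm hp hs A (pnorm_e hp).1
  have h2 := le_opNorm hp hs A (pnorm_e hp).2
  have h3 := abs_fst_le_pnorm hs (app A (1, 0))
  have h4 := abs_snd_le_pnorm hs (app A (1, 0))
  have h5 := abs_fst_le_pnorm hs (app A (0, 1))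
  have h6 := abs_snd_le_pnorm hs (app A (0, 1))
  simp only [app, mul_one, mul_zero, add_zero, zero_add] at *
  fin_cases i <;> fin_cases j <;> simp only [Fin.zero_eta, Fin.mk_one] <;> linarith

/-- Since the operator norm dominates the entries, a neighbourhood in the entrywise topology
contains a ball for the operator norm. -/
lemma exists_opNorm_ball {p s : ℝ} (hp : 0 < p) (hs : 0 < s) {T : Matrix (Fin 2) (Fin 2) ℝ}
    {P : Matrix (Fin 2) (Fin 2) ℝ → Prop} (h : ∀ᶠ S in 𝓝 T, P S) :
    ∃ ε : ℝ, 0 < ε ∧ ∀ S, opNorm p s (T - S) < ε → P S := by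
  have h' : ∀ᶠ S : Fin 2 → Fin 2 → ℝ in 𝓝 (T : Fin 2 → Fin 2 → ℝ),
      P (S : Matrix (Fin 2) (Fin 2) ℝ) := h
  obtain ⟨ε, hε, H⟩ := Metric.eventually_nhds_iff.1 h'
  refine ⟨ε, hε, fun S hS => H ?_⟩
  refine (dist_pi_lt_iff hε).2 fun i => (dist_pi_lt_iff hε).2 fun j => ?_
  rw [dist_comm, Real.dist_eq]
  exact lt_of_le_of_lt (abs_entry_le_opNorm hp hs (T - S) i j) hS

/-- An extreme point is not the midpoint of a nontrivial segment in the ball. -/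
lemma not_extreme {p s : ℝ} {S X : Matrix (Fin 2) (Fin 2) ℝ} (hX : X ≠ 0)
    (h1 : opNorm p s (S + X) ≤ 1) (h2 : opNorm p s (S - X) ≤ 1) :
    S ∉ Set.extremePoints ℝ (unitBall p s) := by
  intro hS
  have := ((mem_extremePoints.1 hS).2 _ h1 _ h2
    ⟨1/2, 1/2, by norm_num, by norm_num, by norm_num, by module⟩).1
  exact hX (by simpa using this)

/-- Strict contractivity on a compact set of vectors is an open condition on the operator. -/
lemma eventually_lt_one {s : ℝ} (hs : 0 < s) {K : Set (ℝ × ℝ)} (hK : IsCompact K)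
    {S : Matrix (Fin 2) (Fin 2) ℝ} (h : ∀ z ∈ K, pnorm s (app S z) < 1) :
    ∀ᶠ A in 𝓝 S, ∀ z ∈ K, pnorm s (app A z) < 1 :=
  hK.eventually_forall_of_forall_eventually (P := fun A z => pnorm s (app A z) < 1)
    fun z hz => (continuous_pnorm_app hs).continuousAt.eventually_lt_const (h z hz)

lemma exists_small {S X : Matrix (Fin 2) (Fin 2) ℝ} {P : Matrix (Fin 2) (Fin 2) ℝ → Prop}
    (h : ∀ᶠ A in 𝓝 S, P A) : ∃ δ : ℝ, 0 < δ ∧ P (S + δ • X) ∧ P (S - δ • X) := by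
  have c1 : Continuous fun δ : ℝ => S + δ • X := by fun_prop
  have c2 : Continuous fun δ : ℝ => S - δ • X := by fun_prop
  have e1 := c1.tendsto' 0 S (by simp) |>.eventually h
  have e2 := c2.tendsto' 0 S (by simp) |>.eventually h
  have e3 : ∀ᶠ δ : ℝ in 𝓝[>] 0, 0 < δ := self_mem_nhdsWithin
  obtain ⟨δ, h1, h2, h3⟩ := (e3.and ((e1.and e2).filter_mono nhdsWithin_le_nhds)).exists
  exact ⟨δ, h1, h2, h3⟩

/-- A strict contraction is not an extreme point. -/
lemma not_extreme_of_lt {p s : ℝ} (hp : 0 < p) (hs : 0 < s) {S : Matrix (Fin 2) (Fin 2) ℝ}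
    (h : ∀ z, pnorm p z = 1 → pnorm s (app S z) < 1) :
    S ∉ Set.extremePoints ℝ (unitBall p s) := by
  obtain ⟨δ, hδ, h1, h2⟩ := exists_small (X := 1) (eventually_lt_one hs (isCompact_psphere hp) h)
  exact not_extreme (smul_ne_zero hδ.ne' one_ne_zero) (opNorm_le hp fun z hz => (h1 z hz).le)
    (opNorm_le hp fun z hz => (h2 z hz).le)

/-! ### The gap along the line `(1 + t, 1 - t)` -/

/-- `gap p s A t` is `‖A w‖_s ^ s - ‖w‖_p ^ s` for `w = (1 + t, 1 - t)`, provided `|t| ≤ 1` and both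
coordinates of `A w` are nonnegative. -/
def gap (p s : ℝ) (A : Matrix (Fin 2) (Fin 2) ℝ) (t : ℝ) : ℝ :=
  (A 0 0 * (1 + t) + A 0 1 * (1 - t)) ^ s + (A 1 0 * (1 + t) + A 1 1 * (1 - t)) ^ s
    - ((1 + t) ^ p + (1 - t) ^ p) ^ (s / p)

/-- The derivative of `gap p s A`. -/
def gap1 (p s : ℝ) (A : Matrix (Fin 2) (Fin 2) ℝ) (t : ℝ) : ℝ :=
  (A 0 0 - A 0 1) * s * (A 0 0 * (1 + t) + A 0 1 * (1 - t)) ^ (s - 1)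
    + (A 1 0 - A 1 1) * s * (A 1 0 * (1 + t) + A 1 1 * (1 - t)) ^ (s - 1)
    - (1 * p * (1 + t) ^ (p - 1) + (-1) * p * (1 - t) ^ (p - 1)) * (s / p)
      * ((1 + t) ^ p + (1 - t) ^ p) ^ (s / p - 1)

/-- The second derivative of `gap p s A`. -/
def gap2 (p s : ℝ) (A : Matrix (Fin 2) (Fin 2) ℝ) (t : ℝ) : ℝ :=
  (A 0 0 - A 0 1) * s * ((A 0 0 - A 0 1) * (s - 1)
      * (A 0 0 * (1 + t) + A 0 1 * (1 - t)) ^ (s - 1 - 1))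
    + (A 1 0 - A 1 1) * s * ((A 1 0 - A 1 1) * (s - 1)
      * (A 1 0 * (1 + t) + A 1 1 * (1 - t)) ^ (s - 1 - 1))
    - ((1 * p * (1 * (p - 1) * (1 + t) ^ (p - 1 - 1))
          + (-1) * p * ((-1) * (p - 1) * (1 - t) ^ (p - 1 - 1))) * (s / p)
        * ((1 + t) ^ p + (1 - t) ^ p) ^ (s / p - 1)
      + (1 * p * (1 + t) ^ (p - 1) + (-1) * p * (1 - t) ^ (p - 1)) * (s / p)
        * ((1 * p * (1 + t) ^ (p - 1) + (-1) * p * (1 - t) ^ (p - 1)) * (s / p - 1)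
          * ((1 + t) ^ p + (1 - t) ^ p) ^ (s / p - 1 - 1)))

/-- `A` maps `(1 + t, 1 - t)` into the open positive quadrant. -/
def Pos (A : Matrix (Fin 2) (Fin 2) ℝ) (t : ℝ) : Prop :=
  0 < A 0 0 * (1 + t) + A 0 1 * (1 - t) ∧ 0 < A 1 0 * (1 + t) + A 1 1 * (1 - t)

lemma hasDerivAt_line (a b t : ℝ) :
    HasDerivAt (fun t : ℝ => a * (1 + t) + b * (1 - t)) (a - b) t := by
  have h := (((hasDerivAt_id t).const_add 1).const_mul a).add
    (((hasDerivAt_id t).const_sub 1).const_mul b)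
  exact h.congr_deriv (by ring)

lemma hasDerivAt_gap {p s t : ℝ} {A : Matrix (Fin 2) (Fin 2) ℝ} (ht : |t| < 1) (hA : Pos A t) :
    HasDerivAt (gap p s A) (gap1 p s A t) t := by
  obtain ⟨ht1, ht2⟩ := abs_lt.1 ht
  have a1 : 0 < 1 + t := by linarith
  have a2 : 0 < 1 - t := by linarith
  have h1 := (hasDerivAt_line (A 0 0) (A 0 1) t).rpow_const (p := s) (Or.inl hA.1.ne')
  have h2 := (hasDerivAt_line (A 1 0) (A 1 1) t).rpow_const (p := s) (Or.inl hA.2.ne')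
  have h3 := ((hasDerivAt_id t).const_add 1).rpow_const (p := p) (Or.inl a1.ne')
  have h4 := ((hasDerivAt_id t).const_sub 1).rpow_const (p := p) (Or.inl a2.ne')
  exact (h1.add h2).sub ((h3.add h4).rpow_const (p := s / p)
    (Or.inl (by simp only [id, Pi.add_apply]; positivity)))

lemma hasDerivAt_gap1 {p s t : ℝ} {A : Matrix (Fin 2) (Fin 2) ℝ} (ht : |t| < 1) (hA : Pos A t) :
    HasDerivAt (gap1 p s A) (gap2 p s A t) t := by
  obtain ⟨ht1, ht2⟩ := abs_lt.1 ht
  have a1 : 0 < 1 + t := by linarith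
  have a2 : 0 < 1 - t := by linarith
  have h1 := (hasDerivAt_line (A 0 0) (A 0 1) t).rpow_const (p := s - 1) (Or.inl hA.1.ne')
  have h2 := (hasDerivAt_line (A 1 0) (A 1 1) t).rpow_const (p := s - 1) (Or.inl hA.2.ne')
  have h3 := ((hasDerivAt_id t).const_add 1).rpow_const (p := p) (Or.inl a1.ne')
  have h4 := ((hasDerivAt_id t).const_sub 1).rpow_const (p := p) (Or.inl a2.ne')
  have h3' := ((hasDerivAt_id t).const_add 1).rpow_const (p := p - 1) (Or.inl a1.ne')
  have h4' := ((hasDerivAt_id t).const_sub 1).rpow_const (p := p - 1) (Or.inl a2.ne')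
  have h5 := (h3.add h4).rpow_const (p := s / p - 1)
    (Or.inl (by simp only [id, Pi.add_apply]; positivity))
  have h6 := ((h3'.const_mul (1 * p)).add (h4'.const_mul ((-1) * p))).mul_const (s / p)
  exact ((h1.const_mul ((A 0 0 - A 0 1) * s)).add (h2.const_mul ((A 1 0 - A 1 1) * s))).sub
    (h6.mul h5)

lemma continuousAt_gap2 {p s : ℝ} {T : Matrix (Fin 2) (Fin 2) ℝ} (hT : Pos T 0) :
    ContinuousAt (fun x : Matrix (Fin 2) (Fin 2) ℝ × ℝ => gap2 p s x.1 x.2) (T, 0) := by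
  have e : ∀ i j, Continuous fun x : Matrix (Fin 2) (Fin 2) ℝ × ℝ => x.1 i j := by
    intro i j; fun_prop
  have l : ∀ (i : Fin 2) (r : ℝ), 0 < T i 0 * (1 + 0) + T i 1 * (1 - 0) → ContinuousAt
      (fun x : Matrix (Fin 2) (Fin 2) ℝ × ℝ =>
        (x.1 i 0 * (1 + x.2) + x.1 i 1 * (1 - x.2)) ^ r) (T, (0:ℝ)) := by
    intro i r h
    refine ContinuousAt.rpow_const (Continuous.continuousAt ?_) (Or.inl h.ne')
    exact ((e i 0).mul (by fun_prop)).add ((e i 1).mul (by fun_prop))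
  have a : ∀ r : ℝ, ContinuousAt (fun x : Matrix (Fin 2) (Fin 2) ℝ × ℝ => (1 + x.2) ^ r)
      (T, (0:ℝ)) := fun r => ContinuousAt.rpow_const (by fun_prop) (Or.inl (by simp))
  have b : ∀ r : ℝ, ContinuousAt (fun x : Matrix (Fin 2) (Fin 2) ℝ × ℝ => (1 - x.2) ^ r)
      (T, (0:ℝ)) := fun r => ContinuousAt.rpow_const (by fun_prop) (Or.inl (by simp))
  have m : ∀ r : ℝ, ContinuousAt (fun x : Matrix (Fin 2) (Fin 2) ℝ × ℝ =>
      ((1 + x.2) ^ p + (1 - x.2) ^ p) ^ r) (T, (0:ℝ)) :=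
    fun r => ((a p).add (b p)).rpow_const (Or.inl (by norm_num))
  have l0 := fun r => l 0 r hT.1
  have l1 := fun r => l 1 r hT.2
  have e' := fun i j => (e i j).continuousAt (x := (T, (0:ℝ)))
  unfold gap2
  fun_prop (disch := assumption)

lemma gap_iff {p s t : ℝ} (hp : 0 < p) (hs : 0 < s) {A : Matrix (Fin 2) (Fin 2) ℝ} (ht : |t| < 1)
    (hA : Pos A t) :
    (pnorm s (app A (1 + t, 1 - t)) ≤ pnorm p (1 + t, 1 - t) ↔ gap p s A t ≤ 0) ∧
    (pnorm s (app A (1 + t, 1 - t)) < pnorm p (1 + t, 1 - t) ↔ gap p s A t < 0) := by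
  obtain ⟨ht1, ht2⟩ := abs_lt.1 ht
  have a1 : 0 < 1 + t := by linarith
  have a2 : 0 < 1 - t := by linarith
  obtain ⟨h1, h2⟩ := hA
  have e : pnorm p (1 + t, 1 - t) = (((1 + t) ^ p + (1 - t) ^ p) ^ (s / p)) ^ (1 / s) := by
    simp only [pnorm, abs_of_pos a1, abs_of_pos a2]
    rw [← Real.rpow_mul (by positivity)]
    congr 1
    field_simp
  rw [e]
  simp only [pnorm, app, abs_of_pos h1, abs_of_pos h2, gap, sub_nonpos, sub_neg]
  exact ⟨Real.rpow_le_rpow_iff (by positivity) (by positivity) (by positivity),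
    Real.rpow_lt_rpow_iff (by positivity) (by positivity) (by positivity)⟩

/-- Vectors in the cone `|z₁ - z₂| < ρ |z₁ + z₂|` are multiples of some `(1 + t, 1 - t)` with
`|t| < ρ`. -/
lemma exists_param {ρ : ℝ} {z : ℝ × ℝ} (h : |z.1 - z.2| < ρ * |z.1 + z.2|) :
    ∃ l t : ℝ, l ≠ 0 ∧ |t| < ρ ∧ z = (l * (1 + t), l * (1 - t)) := by
  have h0 : z.1 + z.2 ≠ 0 := by
    intro h0
    rw [h0, abs_zero, mul_zero] at h
    exact absurd h (not_lt.2 (abs_nonneg _))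
  refine ⟨(z.1 + z.2) / 2, (z.1 - z.2) / (z.1 + z.2), div_ne_zero h0 two_ne_zero, ?_, ?_⟩
  · rwa [abs_div, div_lt_iff₀ (abs_pos.2 h0)]
  · ext <;> simp only <;> field_simp <;> ring

/-! ### The rank-one operator `flat c` -/

/-- The rank-one operator `z ↦ c (z₁ + z₂) (1, 1)`. -/
def flat (c : ℝ) : Matrix (Fin 2) (Fin 2) ℝ := !![c, c; c, c]

/-- The normalisation on `c` says that `flat c` sends the unit vector `2^(-1/p) (1, 1)` to a unit
vector. -/
lemma pnorm_flat {p s c : ℝ} (hs : 0 < s) (hc : 0 < c)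
    (hcs : 2 * (2 * c) ^ s = 2 ^ (s / p)) (z : ℝ × ℝ) :
    pnorm s (app (flat c) z) = |(z.1 + z.2) / 2| * 2 ^ (1 / p) := by
  have e : app (flat c) z = ((z.1 + z.2) / 2 * (2 * c), (z.1 + z.2) / 2 * (2 * c)) := by
    simp only [app, flat, Matrix.of_apply, Matrix.cons_val', Matrix.cons_val_zero,
      Matrix.cons_val_one, Matrix.cons_val_fin_one, Prod.mk.injEq]
    constructor <;> ring
  rw [e, pnorm_smul hs _ (2 * c, 2 * c)]
  congr 1
  simp only [pnorm, abs_of_pos (by positivity : 0 < 2 * c)]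
  rw [← two_mul, hcs, ← Real.rpow_mul zero_le_two]
  congr 1
  field_simp

/-- By strict convexity of `x ↦ x ^ p`, the operator `flat c` attains its norm only on the
diagonal. -/
lemma flat_lt_one {p s c : ℝ} (hp : 1 < p) (hs : 0 < s) (hc : 0 < c)
    (hcs : 2 * (2 * c) ^ s = 2 ^ (s / p)) {z : ℝ × ℝ} (hz : pnorm p z = 1) (hne : z.1 ≠ z.2) :
    pnorm s (app (flat c) z) < 1 := by
  have hp0 : 0 < p := by linarith
  rw [pnorm_flat hs hc hcs]
  rw [pnorm_eq_one_iff hp0] at hz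
  have key : |(z.1 + z.2) / 2| ^ p < 1 / 2 := by
    by_cases h : |z.1| = |z.2|
    · rcases abs_eq_abs.1 h with h | h
      · exact absurd h hne
      · rw [h]; simp [Real.zero_rpow hp0.ne']
    · have h1 := (strictConvexOn_rpow hp).2 (abs_nonneg z.1) (abs_nonneg z.2) h
        (by norm_num : (0:ℝ) < 1 / 2) (by norm_num : (0:ℝ) < 1 / 2) (by norm_num)
      simp only [smul_eq_mul] at h1
      have h2 : |(z.1 + z.2) / 2| ≤ 1 / 2 * |z.1| + 1 / 2 * |z.2| := by
        rw [abs_div, abs_two]; linarith [abs_add_le z.1 z.2]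
      have h3 := Real.rpow_le_rpow (abs_nonneg _) h2 hp0.le
      linarith
  by_contra! hcon
  have h4 := Real.one_le_rpow hcon hp0.le
  rw [Real.mul_rpow (abs_nonneg _) (by positivity), ← Real.rpow_mul zero_le_two,
    one_div_mul_cancel hp0.ne', Real.rpow_one] at h4
  linarith

lemma opNorm_flat {p s c : ℝ} (hp : 1 < p) (hs : 0 < s) (hc : 0 < c)
    (hcs : 2 * (2 * c) ^ s = 2 ^ (s / p)) : opNorm p s (flat c) = 1 := by
  have hp0 : 0 < p := by linarith
  set a : ℝ := (1 / 2) ^ (1 / p) with ha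
  have ha0 : 0 < a := by positivity
  have hz : pnorm p (a, a) = 1 := by
    rw [pnorm_eq_one_iff hp0, abs_of_pos ha0, ha, ← Real.rpow_mul (by norm_num),
      one_div_mul_cancel hp0.ne', Real.rpow_one]
    norm_num
  have h1 : pnorm s (app (flat c) (a, a)) = 1 := by
    rw [pnorm_flat hs hc hcs, add_self_div_two, abs_of_pos ha0, ha,
      ← Real.mul_rpow (by norm_num) (by norm_num)]
    norm_num
  refine le_antisymm (opNorm_le hp0 fun z hz' => ?_) (h1 ▸ le_opNorm hp0 hs _ hz)
  by_cases hne : z.1 = z.2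
  · have hz2 := (pnorm_eq_one_iff hp0 z).1 hz'
    have ha2 := (pnorm_eq_one_iff hp0 (a, a)).1 hz
    simp only [hne, abs_of_pos ha0] at hz2 ha2
    have h3 : |z.2| = a := (Real.rpow_left_inj (abs_nonneg _) ha0.le hp0.ne').1 (by linarith)
    rw [pnorm_flat hs hc hcs] at h1 ⊢
    rw [add_self_div_two, abs_of_pos ha0] at h1
    rw [hne, add_self_div_two, h3, h1]
  · exact (flat_lt_one hp hs hc hcs hz' hne).le

/-- Along the line `(1 + t, 1 - t)` the operator `flat c` is constant while `‖(1 + t, 1 - t)‖_p` is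
strictly convex, so the second derivative of the gap is negative; this persists nearby. -/
lemma exists_radius {p s c : ℝ} (hp : 1 < p) (hs : 0 < s) (hc : 0 < c) :
    ∃ ρ : ℝ, 0 < ρ ∧ ρ < 1 ∧ ∀ᶠ A in 𝓝 (flat c), ∀ t, |t| < ρ → Pos A t ∧ gap2 p s A t < 0 := by
  have hpos : Pos (flat c) 0 := by
    simp [Pos, flat, hc]
  have hneg : gap2 p s (flat c) 0 < 0 := by
    have hp1 : 0 < p - 1 := by linarith
    have hp0 : 0 < p := by linarith
    have : gap2 p s (flat c) 0
        = -((p * (p - 1) + p * (p - 1)) * (s / p) * (1 + 1) ^ (s / p - 1)) := by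
      simp [gap2, flat]
      left; left; ring
    rw [this, neg_lt_zero]
    positivity
  have e : ∀ i j, Continuous fun x : Matrix (Fin 2) (Fin 2) ℝ × ℝ => x.1 i j := by
    intro i j; fun_prop
  have l : ∀ i : Fin 2, Continuous fun x : Matrix (Fin 2) (Fin 2) ℝ × ℝ =>
      x.1 i 0 * (1 + x.2) + x.1 i 1 * (1 - x.2) := fun i =>
    ((e i 0).mul (by fun_prop)).add ((e i 1).mul (by fun_prop))
  have ev : ∀ᶠ x : Matrix (Fin 2) (Fin 2) ℝ × ℝ in 𝓝 (flat c) ×ˢ 𝓝 (0:ℝ),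
      Pos x.1 x.2 ∧ gap2 p s x.1 x.2 < 0 := by
    rw [← nhds_prod_eq]
    exact ((((l 0).tendsto (flat c, (0:ℝ))).eventually_const_lt hpos.1).and
      (((l 1).tendsto (flat c, (0:ℝ))).eventually_const_lt hpos.2)).and
      ((continuousAt_gap2 hpos).eventually_lt_const hneg)
  obtain ⟨P, hP, Q, hQ, H⟩ := eventually_prod_iff.1 ev
  obtain ⟨ρ, hρ, hρQ⟩ := Metric.eventually_nhds_iff.1 hQ
  refine ⟨min ρ (1 / 2), by positivity, (min_le_right _ _).trans_lt (by norm_num), ?_⟩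
  filter_upwards [hP] with A hA t ht
  exact H hA (hρQ (by simpa using ht.trans_le (min_le_left _ _)))

/-! ### Perturbing operators near `flat c` -/

/-- If the gap has second derivative `< 0` on `(-ρ, ρ)` and vanishes to first order at some `t₀`,
then it is nonpositive. -/
lemma gap_nonpos {p s ρ t₀ t : ℝ} (hρ : ρ < 1) {A : Matrix (Fin 2) (Fin 2) ℝ}
    (hA : ∀ t, |t| < ρ → Pos A t ∧ gap2 p s A t < 0) (h0 : |t₀| < ρ) (ht : |t| < ρ)
    (hg : gap p s A t₀ = 0) (hg1 : gap1 p s A t₀ = 0) : gap p s A t ≤ 0 := by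
  have d0 : ∀ x ∈ Set.Ioo (-ρ) ρ, HasDerivAt (gap p s A) (gap1 p s A x) x := fun x hx =>
    hasDerivAt_gap ((abs_lt.2 hx).trans hρ) (hA x (abs_lt.2 hx)).1
  have hc : ConcaveOn ℝ (Set.Ioo (-ρ) ρ) (gap p s A) := by
    refine concaveOn_of_hasDerivWithinAt2_nonpos (convex_Ioo _ _)
      (f' := gap1 p s A) (f'' := gap2 p s A)
      (fun x hx => (d0 x hx).continuousAt.continuousWithinAt) ?_ ?_ ?_ <;>
      rw [interior_Ioo] <;> intro x hx
    · exact (d0 x hx).hasDerivWithinAt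
    · exact (hasDerivAt_gap1 ((abs_lt.2 hx).trans hρ) (hA x (abs_lt.2 hx)).1).hasDerivWithinAt
    · exact (hA x (abs_lt.2 hx)).2.le
  have hd := d0 t₀ (abs_lt.1 h0)
  rw [hg1] at hd
  rcases lt_trichotomy t₀ t with h | h | h
  · have := hc.slope_le_of_hasDerivAt (abs_lt.1 h0) (abs_lt.1 ht) h hd
    rw [slope_def_field, hg, div_le_iff₀ (by linarith)] at this
    linarith
  · rw [← h, hg]
  · have := hc.le_slope_of_hasDerivAt (abs_lt.1 ht) (abs_lt.1 h0) h hd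
    rw [slope_def_field, hg, le_div_iff₀ (by linarith)] at this
    linarith

/-- The rank-one direction that kills `(1 + t₀, 1 - t₀)` and whose range is spanned by `r`. -/
def dir (t₀ : ℝ) (r : ℝ × ℝ) : Matrix (Fin 2) (Fin 2) ℝ :=
  !![r.1 * (1 - t₀) / 2, -(r.1 * (1 + t₀) / 2); r.2 * (1 - t₀) / 2, -(r.2 * (1 + t₀) / 2)]

/-- Moving `S` along `dir t₀ r`, with `r` tangent to the `ℓ^s` sphere at the image of
`(1 + t₀, 1 - t₀)`, does not change the first-order behaviour of the gap at `t₀`. -/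
lemma gap_add_dir {p s t₀ x y : ℝ} {S : Matrix (Fin 2) (Fin 2) ℝ}
    (hx : S 0 0 * (1 + t₀) + S 0 1 * (1 - t₀) = x)
    (hy : S 1 0 * (1 + t₀) + S 1 1 * (1 - t₀) = y) (δ : ℝ) :
    gap p s (S + δ • dir t₀ (y ^ (s - 1), -x ^ (s - 1))) t₀ = gap p s S t₀ ∧
    gap1 p s (S + δ • dir t₀ (y ^ (s - 1), -x ^ (s - 1))) t₀ = gap1 p s S t₀ := by
  set D := dir t₀ (y ^ (s - 1), -x ^ (s - 1)) with hD
  have e0 : (S + δ • D) 0 0 * (1 + t₀) + (S + δ • D) 0 1 * (1 - t₀) = x := by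
    rw [← hx]; simp [hD, dir]; ring
  have e1 : (S + δ • D) 1 0 * (1 + t₀) + (S + δ • D) 1 1 * (1 - t₀) = y := by
    rw [← hy]; simp [hD, dir]; ring
  have f0 : (S + δ • D) 0 0 - (S + δ • D) 0 1 = S 0 0 - S 0 1 + δ * y ^ (s - 1) := by
    simp [hD, dir]; ring
  have f1 : (S + δ • D) 1 0 - (S + δ • D) 1 1 = S 1 0 - S 1 1 - δ * x ^ (s - 1) := by
    simp [hD, dir]; ring
  unfold gap gap1
  rw [e0, e1, f0, f1, hx, hy]
  refine ⟨rfl, ?_⟩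
  ring

/-- Operators near `flat c` are not extreme in the unit ball. -/
lemma eventually_not_extreme {p s c : ℝ} (hp : 1 < p) (hs : 0 < s) (hc : 0 < c)
    (hcs : 2 * (2 * c) ^ s = 2 ^ (s / p)) :
    ∀ᶠ S in 𝓝 (flat c), S ∉ Set.extremePoints ℝ (unitBall p s) := by
  have hp0 : 0 < p := by linarith
  obtain ⟨ρ, hρ0, hρ, hev⟩ := exists_radius (s := s) hp hs hc
  set K : Set (ℝ × ℝ) := {z | pnorm p z = 1} ∩ {z | ρ * |z.1 + z.2| ≤ |z.1 - z.2|} with hK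
  have hKc : IsCompact K := (isCompact_psphere hp0).inter_right
    (isClosed_le (by fun_prop) (by fun_prop))
  have hKlt : ∀ z ∈ K, pnorm s (app (flat c) z) < 1 := by
    rintro z ⟨hz, hz2⟩
    refine flat_lt_one hp hs hc hcs hz fun h => ?_
    have hz : pnorm p z = 1 := hz
    have hz2 : ρ * |z.1 + z.2| ≤ |z.1 - z.2| := hz2
    rw [h, sub_self, abs_zero, ← two_mul, abs_mul, abs_two] at hz2
    have h0 : |z.2| = 0 := by nlinarith [abs_nonneg z.2]
    rw [pnorm_eq_one_iff hp0, h, h0, Real.zero_rpow hp0.ne'] at hz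
    norm_num at hz
  have hgood := hev.and (eventually_lt_one hs hKc hKlt)
  filter_upwards [eventually_eventually_nhds.2 hgood] with S hS hext
  obtain ⟨hS1, hS2⟩ := hS.self_of_nhds
  have hball : opNorm p s S ≤ 1 := hext.1
  by_cases hlt : ∀ z, pnorm p z = 1 → pnorm s (app S z) < 1
  · exact not_extreme_of_lt hp0 hs hlt hext
  push Not at hlt
  obtain ⟨z, hz, hz1⟩ := hlt
  have hzK : |z.1 - z.2| < ρ * |z.1 + z.2| := by
    by_contra! hcon
    exact absurd (hS2 z ⟨hz, hcon⟩) (not_lt.2 hz1)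
  -- `z` is a norming vector of `S`, proportional to `(1 + t₀, 1 - t₀)`.
  obtain ⟨l, t₀, hl, ht₀, rfl⟩ := exists_param hzK
  have hl' : 0 < |l| := abs_pos.2 hl
  have hle : ∀ t, |t| < ρ → gap p s S t ≤ 0 := by
    intro t ht
    refine (gap_iff hp0 hs (ht.trans hρ) (hS1 t ht).1).1.1 ?_
    have hN : 0 < pnorm p (1 + t, 1 - t) := by
      have := abs_fst_le_pnorm hp0 (1 + t, 1 - t)
      refine lt_of_lt_of_le (abs_pos.2 ?_) this
      have := (abs_lt.1 (ht.trans hρ)).1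
      simp only; linarith
    have h1 : pnorm p ((pnorm p (1 + t, 1 - t))⁻¹ * (1 + t),
        (pnorm p (1 + t, 1 - t))⁻¹ * (1 - t)) = 1 := by
      rw [pnorm_smul hp0 _ (1 + t, 1 - t), abs_of_pos (inv_pos.2 hN), inv_mul_cancel₀ hN.ne']
    have h2 := (le_opNorm hp0 hs S h1).trans hball
    rw [app_smul S _ (1 + t, 1 - t), pnorm_smul hs, abs_of_pos (inv_pos.2 hN),
      inv_mul_le_iff₀ hN, mul_one] at h2
    exact h2
  have hge : 0 ≤ gap p s S t₀ := by
    by_contra! hcon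
    have h1 := (gap_iff hp0 hs (ht₀.trans hρ) (hS1 t₀ ht₀).1).2.2 hcon
    rw [pnorm_smul hp0 _ (1 + t₀, 1 - t₀)] at hz
    rw [app_smul S _ (1 + t₀, 1 - t₀), pnorm_smul hs] at hz1
    have := mul_lt_mul_of_pos_left h1 hl'
    linarith
  have hg0 : gap p s S t₀ = 0 := le_antisymm (hle t₀ ht₀) hge
  have hg1 : gap1 p s S t₀ = 0 := by
    refine IsLocalMax.hasDerivAt_eq_zero (f := gap p s S) (a := t₀) ?_
      (hasDerivAt_gap (ht₀.trans hρ) (hS1 t₀ ht₀).1)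
    filter_upwards [Ioo_mem_nhds (abs_lt.1 ht₀).1 (abs_lt.1 ht₀).2] with t ht
    rw [hg0]
    exact hle t (abs_lt.2 ht)
  obtain ⟨hx, hy⟩ := (hS1 t₀ ht₀).1
  set x := S 0 0 * (1 + t₀) + S 0 1 * (1 - t₀) with hxe
  set y := S 1 0 * (1 + t₀) + S 1 1 * (1 - t₀) with hye
  set D := dir t₀ (y ^ (s - 1), -x ^ (s - 1)) with hD
  have hD0 : D ≠ 0 := by
    intro h
    have h00 : D 0 0 = 0 := by rw [h]; rfl
    have h1 : 0 < 1 - t₀ := by linarith [(abs_lt.1 (ht₀.trans hρ)).2]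
    have h2 : D 0 0 = y ^ (s - 1) * (1 - t₀) / 2 := by simp [hD, dir]
    have : 0 < y ^ (s - 1) * (1 - t₀) / 2 := by positivity
    linarith
  have hin : ∀ δ : ℝ, ((∀ t, |t| < ρ → Pos (S + δ • D) t ∧ gap2 p s (S + δ • D) t < 0) ∧
      ∀ z ∈ K, pnorm s (app (S + δ • D) z) < 1) → opNorm p s (S + δ • D) ≤ 1 := by
    rintro δ ⟨hA1, hA2⟩
    refine opNorm_le hp0 fun w hw => ?_
    by_cases hwK : ρ * |w.1 + w.2| ≤ |w.1 - w.2|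
    · exact (hA2 w ⟨hw, hwK⟩).le
    obtain ⟨m, t, hm, ht, rfl⟩ := exists_param (not_le.1 hwK)
    obtain ⟨ga, gb⟩ := gap_add_dir (p := p) hxe.symm hye.symm δ
    have h3 := gap_nonpos hρ hA1 ht₀ ht (ga.trans hg0) (gb.trans hg1)
    have h4 := (gap_iff hp0 hs (ht.trans hρ) (hA1 t ht).1).1.2 h3
    rw [pnorm_smul hp0 _ (1 + t, 1 - t)] at hw
    rw [app_smul _ _ (1 + t, 1 - t), pnorm_smul hs]
    exact (mul_le_mul_of_nonneg_left h4 (abs_nonneg _)).trans hw.le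
  obtain ⟨δ, hδ, g1, g2⟩ := exists_small (X := D) hS
  rw [sub_eq_add_neg, ← neg_smul] at g2
  refine not_extreme (smul_ne_zero hδ.ne' hD0) (hin δ g1) ?_ hext
  rw [sub_eq_add_neg, ← neg_smul]
  exact hin (-δ) g2

/-- In the cases (i) 1/p + 1/q = 1, (ii) p = 2 or q = 2, (iii) p, q > 2, the extreme points
  of the unit ball of L(ℓ^p_2, ℓ^{q'}_2) ≅ (ℓ^p_2 ⊗π ℓ^q_2)* are not dense in the unit
  sphere; i.e., ℓ^p_2 ⊗π ℓ^q_2 lacks the Mazur Intersection Property. -/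
theorem stmt_18 (p q : ℝ) (hp : 1 < p) (hq : 1 < q)
    (h : 1 / p + 1 / q = 1 ∨ p = 2 ∨ q = 2 ∨ (2 < p ∧ 2 < q)) :
    ∃ T : Matrix (Fin 2) (Fin 2) ℝ, opNorm p (q / (q - 1)) T = 1 ∧
      ∃ ε : ℝ, 0 < ε ∧
        ∀ S ∈ Set.extremePoints ℝ (unitBall p (q / (q - 1))),
          ε ≤ opNorm p (q / (q - 1)) (T - S) := by
  have hp0 : 0 < p := by linarith
  have hq1 : 0 < q - 1 := by linarith
  set s := q / (q - 1) with hs_def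
  have hs : 0 < s := by positivity
  -- `c` is chosen so that `z ↦ c (z₁ + z₂) (1, 1)` has norm one.
  set c : ℝ := (2 ^ (s / p) / 2) ^ (1 / s) / 2 with hc_def
  have hc : 0 < c := by positivity
  have hcs : 2 * (2 * c) ^ s = 2 ^ (s / p) := by
    rw [hc_def, mul_div_cancel₀ _ two_ne_zero, ← Real.rpow_mul (by positivity),
      one_div_mul_cancel hs.ne', Real.rpow_one, mul_div_cancel₀ _ two_ne_zero]
  obtain ⟨ε, hε, H⟩ := exists_opNorm_ball hp0 hs (eventually_not_extreme hp hs hc hcs)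
  exact ⟨flat c, opNorm_flat hp hs hc hcs, ε, hε, fun S hS => not_lt.1 fun hlt => H S hlt hS⟩
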